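/- The vector space X_4 of formal linear combinations Σ α_{i,j} A_iB_j (over the 6×7 grid of pairs of a 3-part partition A_i and a 2-part partition B_j of {1,2,3,4}) whose evaluation as spanning forest polynomials vanishes on every graph with 4 marked vertices has dimension exactly 8 = 4·(4−2); a basis is given by the eight differences L_{4,4}(1)−L_{4,4}(3), L_{4,4}(2)−L_{4,4}(3), L_{4,3}(1)−L_{4,4}(3), L_{4,3}(2)−L_{4,4}(3), L_{4,2}(1)−L_{4,4}(3), L_{4,2}(2)−L_{4,4}(3), L_{4,1}(1)−L_{4,4}(3), L_{4,1}(2)−L_{4,4}(3). -/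

import Mathlib

open Finset

/-- The six 3-part set partitions of the four marked vertices, in the paper's indexing:
`A₁=(1,1,2,3)`, `A₂=(1,2,1,3)`, `A₃=(1,2,2,3)`, `A₄=(1,2,3,1)`, `A₅=(1,2,3,2)`,
`A₆=(1,2,3,3)`. -/
def Apart4 : Fin 6 → Fin 4 → Option ℕ :=
  ![![some 1, some 1, some 2, some 3],
    ![some 1, some 2, some 1, some 3],
    ![some 1, some 2, some 2, some 3],
    ![some 1, some 2, some 3, some 1],
    ![some 1, some 2, some 3, some 2],
    ![some 1, some 2, some 3, some 3]]

/-- The seven 2-part set partitions of the four marked vertices, in the paper's indexing: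
`B₁=(1,1,1,2)`, `B₂=(1,1,2,1)`, `B₃=(1,2,1,1)`, `B₄=(1,2,2,2)`, `B₅=(1,1,2,2)`,
`B₆=(1,2,1,2)`, `B₇=(1,2,2,1)`. -/
def Bpart4 : Fin 7 → Fin 4 → Option ℕ :=
  ![![some 1, some 1, some 1, some 2],
    ![some 1, some 1, some 2, some 1],
    ![some 1, some 2, some 1, some 1],
    ![some 1, some 2, some 2, some 2],
    ![some 1, some 1, some 2, some 2],
    ![some 1, some 2, some 1, some 2],
    ![some 1, some 2, some 2, some 1]]

/-- The formal sum of `A_iB_j` monomials (an element of the vector space `V₄` with basis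
the 42 monomials, recorded as its coefficient vector) determined by a list of index
pairs. -/
def mkAB (l : List (Fin 6 × Fin 7)) : Fin 6 × Fin 7 → ℚ := fun q => (l.count q : ℚ)

/-- `L_{4,4}(1) = A₄(B₁+B₄+B₅+B₆)+A₁(B₄+B₆)+A₂(B₄+B₅)` as a formal sum. -/
def L441 : Fin 6 × Fin 7 → ℚ :=
  mkAB [(3,0),(3,3),(3,4),(3,5),(0,3),(0,5),(1,3),(1,4)]
/-- `L_{4,4}(2) = A₅(B₁+B₃+B₅+B₇)+A₁(B₃+B₇)+A₃(B₃+B₅)`. -/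
def L442 : Fin 6 × Fin 7 → ℚ :=
  mkAB [(4,0),(4,2),(4,4),(4,6),(0,2),(0,6),(2,2),(2,4)]
/-- `L_{4,4}(3) = A₆(B₁+B₂+B₆+B₇)+A₂(B₂+B₇)+A₃(B₂+B₆)`. -/
def L443 : Fin 6 × Fin 7 → ℚ :=
  mkAB [(5,0),(5,1),(5,5),(5,6),(1,1),(1,6),(2,1),(2,5)]
/-- `L_{4,3}(1) = A₂(B₂+B₄+B₅+B₇)+A₁(B₄+B₇)+A₄(B₄+B₅)`. -/
def L431 : Fin 6 × Fin 7 → ℚ :=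
  mkAB [(1,1),(1,3),(1,4),(1,6),(0,3),(0,6),(3,3),(3,4)]
/-- `L_{4,3}(2) = A₃(B₂+B₃+B₅+B₆)+A₁(B₃+B₆)+A₅(B₃+B₅)`. -/
def L432 : Fin 6 × Fin 7 → ℚ :=
  mkAB [(2,1),(2,2),(2,4),(2,5),(0,2),(0,5),(4,2),(4,4)]
/-- `L_{4,3}(3) = A₆(B₁+B₂+B₆+B₇)+A₄(B₁+B₆)+A₅(B₁+B₇)`. -/
def L433 : Fin 6 × Fin 7 → ℚ :=
  mkAB [(5,0),(5,1),(5,5),(5,6),(3,0),(3,5),(4,0),(4,6)]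
/-- `L_{4,2}(1) = A₁(B₃+B₄+B₆+B₇)+A₂(B₄+B₇)+A₄(B₄+B₆)`. -/
def L421 : Fin 6 × Fin 7 → ℚ :=
  mkAB [(0,2),(0,3),(0,5),(0,6),(1,3),(1,6),(3,3),(3,5)]
/-- `L_{4,2}(2) = A₃(B₂+B₃+B₅+B₆)+A₂(B₂+B₅)+A₆(B₂+B₆)`. -/
def L422 : Fin 6 × Fin 7 → ℚ :=
  mkAB [(2,1),(2,2),(2,4),(2,5),(1,1),(1,4),(5,1),(5,5)]
/-- `L_{4,1}(1) = A₁(B₃+B₄+B₆+B₇)+A₃(B₃+B₆)+A₅(B₃+B₇)`. -/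
def L411 : Fin 6 × Fin 7 → ℚ :=
  mkAB [(0,2),(0,3),(0,5),(0,6),(2,2),(2,5),(4,2),(4,6)]
/-- `L_{4,1}(2) = A₂(B₂+B₄+B₅+B₇)+A₃(B₂+B₅)+A₆(B₂+B₇)`. -/
def L412 : Fin 6 × Fin 7 → ℚ :=
  mkAB [(1,1),(1,3),(1,4),(1,6),(2,1),(2,4),(5,1),(5,6)]

/-- A finite edge set `F` is a spanning forest of `G` compatible with the set partition of
(a subset of) the marked vertices `v : Fin m → V` encoded by `p : Fin m → Option ℕ`
(`p i = none` means vertex `i` is unconstrained, `p i = some ℓ` means vertex `i` lies in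
the part labelled `ℓ`): the edges of `F` lie in `G`, `F` is acyclic, two constrained
marked vertices lie in the same tree iff they have the same label, and every vertex of
the graph lies in the tree of some constrained marked vertex (so the trees of the forest
are in bijection with the parts of the partition). -/
def IsCompatibleForest {V : Type*} [Fintype V] [DecidableEq V] (G : SimpleGraph V) {m : ℕ}
    (v : Fin m → V) (p : Fin m → Option ℕ) (F : Finset (Sym2 V)) : Prop :=
  (F : Set (Sym2 V)) ⊆ G.edgeSet ∧
  (SimpleGraph.fromEdgeSet (F : Set (Sym2 V))).IsAcyclic ∧
  (∀ i j : Fin m, p i ≠ none → p j ≠ none →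
    ((SimpleGraph.fromEdgeSet (F : Set (Sym2 V))).Reachable (v i) (v j) ↔ p i = p j)) ∧
  (∀ w : V, ∃ i : Fin m, p i ≠ none ∧
    (SimpleGraph.fromEdgeSet (F : Set (Sym2 V))).Reachable w (v i))

/-- The spanning forest polynomial `Φ_P = Σ_{F ∼ P} Π_{e ∉ F} x_e` of the graph `G` with
edge variables `x`, marked vertices `v`, and partition `P` encoded by `p`. -/
noncomputable def forestPoly {V : Type*} [Fintype V] [DecidableEq V] {R : Type*}
    [CommRing R] (G : SimpleGraph V) [DecidableRel G.Adj] (x : Sym2 V → R) {m : ℕ}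
    (v : Fin m → V) (p : Fin m → Option ℕ) : R :=
  ∑ F ∈ G.edgeFinset.powerset,
    (letI := Classical.dec (IsCompatibleForest G v p F)
     if IsCompatibleForest G v p F then ∏ e ∈ G.edgeFinset \ F, x e else 0)

/-- `α ∈ X₄`: the formal linear combination `Σ α_{ij} A_iB_j` evaluates to zero, as
spanning forest polynomials, on every graph with 4 distinct marked vertices and every
assignment of values to the edge variables. -/
def MemX4 (α : Fin 6 × Fin 7 → ℚ) : Prop :=
  ∀ (V : Type) [Fintype V] [DecidableEq V] (G : SimpleGraph V) [DecidableRel G.Adj]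
    (x : Sym2 V → ℚ) (v : Fin 4 → V), Function.Injective v →
    ∑ q : Fin 6 × Fin 7, α q *
      (forestPoly G x v (Apart4 q.1) * forestPoly G x v (Bpart4 q.2)) = 0

/-!
For distinct marked vertices `j` and `c`, the evaluation of `L_{4,c}(j)` is the product of the
spanning tree polynomial and the spanning forest polynomial separating all marked vertices, which
does not depend on `j` and `c`. To see this, let `A` and `B` be sets of roots not containing `a`.
In the sum over `b ∈ A` of the forests rooted at `A` with `a` in the tree of `b`, times the forests
rooted at `B ∪ {a}` with `b` outside the tree of `a`, telescope the indicator function of the latter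
tree along the path from `a` to `b` in the former forest. Cutting the path at an edge makes this a
sum over pairs of forests rooted at `A ∪ {a}` and `B ∪ {a}` and an edge crossing the tree of `a`,
which is symmetric in `A` and `B`; so `A` and `B` may be exchanged, and for `A = {c}` the sum has a
single term.

Conversely, in a forest on the marked vertices alone each partition has at most one compatible
subforest. Forests with two edges, one of them with variable `0`, show that the coefficient of
`A_i B_j` vanishes if `A_i` refines `B_j`; each of the 16 trees gives a linear relation between
three of the remaining 24 coefficients, which leaves 8 coordinates.
-/

section Forests

open SimpleGraph

variable {V : Type*}

theorem reachable_sup_edge_iff {G : SimpleGraph V} {u w a b : V} :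
    (G ⊔ edge u w).Reachable a b ↔
      G.Reachable a b ∨ (G.Reachable a u ∧ G.Reachable w b) ∨
        (G.Reachable a w ∧ G.Reachable u b) := by
  have mono {c d : V} (h : G.Reachable c d) : (G ⊔ edge u w).Reachable c d := h.mono le_sup_left
  have new_edge : (G ⊔ edge u w).Reachable u w := by
    obtain rfl | huw := eq_or_ne u w
    · rfl
    · exact Adj.reachable (Or.inr ((edge_adj ..).2 ⟨Or.inl ⟨rfl, rfl⟩, huw⟩))
  refine ⟨?_, ?_⟩
  · rintro ⟨p⟩
    induction p with
    | nil => exact Or.inl .rfl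
    | cons h _ ih =>
      rw [sup_adj, edge_adj] at h
      obtain h | ⟨⟨rfl, rfl⟩ | ⟨rfl, rfl⟩, -⟩ := h
      · exact ih.imp h.reachable.trans
          (Or.imp (And.imp_left h.reachable.trans) (And.imp_left h.reachable.trans))
      · obtain hwb | ⟨-, hwb⟩ | ⟨-, hub⟩ := ih
        exacts [.inr (.inl ⟨.rfl, hwb⟩), .inr (.inl ⟨.rfl, hwb⟩), .inl hub]
      · obtain hub | ⟨-, hwb⟩ | ⟨-, hub⟩ := ih
        exacts [.inr (.inr ⟨.rfl, hub⟩), .inl hwb, .inr (.inr ⟨.rfl, hub⟩)]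
  · rintro (h | ⟨hau, hwb⟩ | ⟨haw, hub⟩)
    · exact mono h
    · exact (mono hau).trans (new_edge.trans (mono hwb))
    · exact (mono haw).trans (new_edge.symm.trans (mono hub))

theorem reachable_of_mem_darts {T : SimpleGraph V} {a b : V} {p : T.Walk a b}
    (hp : p.IsPath) {d : T.Dart} (hd : d ∈ p.darts) :
    (T.deleteEdges {d.edge}).Reachable a d.fst ∧ (T.deleteEdges {d.edge}).Reachable d.snd b := by
  induction p with
  | nil => simp at hd
  | @cons a a' b h p ih =>
    rw [Walk.cons_isPath_iff] at hp
    rw [Walk.darts_cons, List.mem_cons] at hd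
    have fresh : s(a, a') ∉ p.edges := fun h => hp.2 (p.fst_mem_support_of_mem_edges h)
    obtain rfl | hd := hd
    · exact ⟨.rfl, ⟨p.toDeleteEdge _ fresh⟩⟩
    · have ha : (T.deleteEdges {d.edge}).Adj a a' :=
        deleteEdges_adj.2 ⟨h, fun he => fresh
          (Set.mem_singleton_iff.1 he ▸ List.mem_map_of_mem hd)⟩
      exact (ih hp.1 hd).imp_left ha.reachable.trans

theorem mem_darts_iff_reachable {T : SimpleGraph V} (hT : T.IsAcyclic) {a b : V} {p : T.Walk a b}
    (hp : p.IsPath) {d : T.Dart} :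
    d ∈ p.darts ↔ (T.deleteEdges {d.edge}).Reachable a d.fst ∧
      (T.deleteEdges {d.edge}).Reachable d.snd b := by
  refine ⟨reachable_of_mem_darts hp, fun ⟨hau, hwb⟩ => ?_⟩
  have bridge : ¬ (T.deleteEdges {d.edge}).Reachable d.fst d.snd :=
    isBridge_iff.1 (isAcyclic_iff_forall_adj_isBridge.1 hT d.adj)
  by_contra hd
  by_cases hsymm : d.symm ∈ p.darts
  · have h := (reachable_of_mem_darts hp hsymm).1
    rw [Dart.edge_symm] at h
    exact bridge (hau.symm.trans h)
  · have avoid : d.edge ∉ p.edges := by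
      rintro h
      obtain ⟨d', hd', he⟩ := List.mem_map.1 h
      obtain rfl | rfl := (dart_edge_eq_iff d' d).1 he
      exacts [hd hd', hsymm hd']
    exact bridge (hau.symm.trans (Reachable.trans ⟨p.toDeleteEdge _ avoid⟩ hwb.symm))

theorem sum_map_darts_sub {M : Type*} [AddCommGroup M] {G : SimpleGraph V} (f : V → M) {a b : V}
    (p : G.Walk a b) : (p.darts.map fun d => f d.fst - f d.snd).sum = f a - f b := by
  induction p with
  | nil => simp
  | cons h p ih => simp [ih]

/-- The graph on `V` spanned by the finite edge set `F`, through which acyclicity and connectedness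
of `F` are expressed; loops in `F` are ignored. -/
abbrev edgeGraph (F : Finset (Sym2 V)) : SimpleGraph V := fromEdgeSet (F : Set (Sym2 V))

variable [DecidableEq V] {F : Finset (Sym2 V)}

theorem edgeGraph_insert (F : Finset (Sym2 V)) (u w : V) :
    edgeGraph (insert s(u, w) F) = edgeGraph F ⊔ edge u w := by
  rw [edge, edgeGraph, coe_insert, Set.insert_eq, Set.union_comm, fromEdgeSet_union]

theorem edgeGraph_erase (F : Finset (Sym2 V)) (e : Sym2 V) :
    edgeGraph (F.erase e) = (edgeGraph F).deleteEdges {e} := by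
  rw [edgeGraph, coe_erase, deleteEdges_fromEdgeSet]

theorem reachable_insert_iff {u w a b : V} :
    (edgeGraph (insert s(u, w) F)).Reachable a b ↔
      (edgeGraph F).Reachable a b ∨
        ((edgeGraph F).Reachable a u ∧ (edgeGraph F).Reachable w b) ∨
          ((edgeGraph F).Reachable a w ∧ (edgeGraph F).Reachable u b) := by
  rw [edgeGraph_insert, reachable_sup_edge_iff]

theorem isAcyclic_insert_iff {u w : V} (huw : u ≠ w) (hF : s(u, w) ∉ F) :
    (edgeGraph (insert s(u, w) F)).IsAcyclic ↔
      (edgeGraph F).IsAcyclic ∧ ¬ (edgeGraph F).Reachable u w := by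
  rw [edgeGraph_insert, isAcyclic_sup_fromEdgeSet_iff]
  simp only [huw, false_or, fromEdgeSet_adj, mem_coe, hF, false_and, imp_false]

omit [DecidableEq V] in
theorem reachable_of_edge_mem {G : SimpleGraph V} {d : G.Dart} (hd : d.edge ∈ F) :
    (edgeGraph F).Reachable d.fst d.snd :=
  Adj.reachable ((fromEdgeSet_adj _).2 ⟨hd, d.adj.ne⟩)

open scoped Classical in
theorem sum_darts_telescope [Fintype V] {M : Type*} [AddCommGroup M] {G : SimpleGraph V}
    [DecidableRel G.Adj]
    (hF : (F : Set (Sym2 V)) ⊆ G.edgeSet) (hacyclic : (edgeGraph F).IsAcyclic) {a b : V}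
    (hab : (edgeGraph F).Reachable a b) (f : V → M) :
    ∑ d : G.Dart with d.edge ∈ F ∧ (edgeGraph (F.erase d.edge)).Reachable a d.fst ∧
      (edgeGraph (F.erase d.edge)).Reachable d.snd b, (f d.fst - f d.snd) = f a - f b := by
  have hle : edgeGraph F ≤ G := (fromEdgeSet_mono hF).trans_eq (fromEdgeSet_edgeSet G)
  obtain ⟨p, hp⟩ := hab.exists_isPath
  have hnodup : (p.mapLe hle).darts.Nodup :=
    Walk.darts_nodup_of_support_nodup (hp.mapLe hle).support_nodup
  rw [← sum_map_darts_sub f (p.mapLe hle), ← List.sum_toFinset _ hnodup]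
  refine sum_congr (Finset.ext fun d => ?_) fun _ _ => rfl
  rw [List.mem_toFinset, Walk.mapLe, Walk.darts_map, List.mem_map, mem_filter_univ]
  constructor
  · rintro ⟨hd, hreach⟩
    have hadj : (edgeGraph F).Adj d.fst d.snd := (fromEdgeSet_adj _).2 ⟨hd, d.adj.ne⟩
    simp only [edgeGraph_erase] at hreach
    exact ⟨⟨d.toProd, hadj⟩, (mem_darts_iff_reachable hacyclic hp).2 hreach, rfl⟩
  · rintro ⟨d, hd, rfl⟩
    simp only [edgeGraph_erase]
    exact ⟨((fromEdgeSet_adj _).1 d.adj).1, (mem_darts_iff_reachable hacyclic hp).1 hd⟩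

end Forests

section RootedForests

open SimpleGraph

variable {V : Type*} [DecidableEq V] {F : Finset (Sym2 V)}

/-- `F` spans a forest each tree of which contains exactly one vertex of `S`, its root. -/
structure IsRootedForest (F : Finset (Sym2 V)) (S : Finset V) : Prop where
  isAcyclic : (edgeGraph F).IsAcyclic
  eq_of_reachable : ∀ ⦃a⦄, a ∈ S → ∀ ⦃b⦄, b ∈ S → (edgeGraph F).Reachable a b → a = b
  exists_reachable : ∀ y, ∃ a ∈ S, (edgeGraph F).Reachable y a

variable {S : Finset V} {a b u w : V}

theorem IsRootedForest.not_reachable_of_notMem (h : IsRootedForest F (insert a S)) (ha : a ∉ S)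
    (hb : b ∈ S) : ¬ (edgeGraph F).Reachable a b := fun hab =>
  ha (h.eq_of_reachable (mem_insert_self a S) (mem_insert_of_mem hb) hab ▸ hb)

theorem IsRootedForest.not_reachable_iff_exists (h : IsRootedForest F (insert a S)) (ha : a ∉ S) :
    ¬ (edgeGraph F).Reachable a w ↔ ∃ b ∈ S, (edgeGraph F).Reachable w b := by
  refine ⟨fun haw => ?_, fun ⟨b, hb, hwb⟩ haw => h.not_reachable_of_notMem ha hb (haw.trans hwb)⟩
  obtain ⟨b, hb, hwb⟩ := h.exists_reachable w
  obtain rfl | hb := mem_insert.1 hb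
  exacts [absurd hwb.symm haw, ⟨b, hb, hwb⟩]

theorem IsRootedForest.of_insert_edge (h : IsRootedForest (insert s(u, w) F) S) (hb : b ∈ S)
    (huw : u ≠ w) (hF : s(u, w) ∉ F) (hau : (edgeGraph F).Reachable a u)
    (hwb : (edgeGraph F).Reachable w b) : IsRootedForest F (insert a S) := by
  obtain ⟨hacyclic, hnuw⟩ := (isAcyclic_insert_iff huw hF).1 h.isAcyclic
  have a_apart : ∀ c ∈ S, ¬ (edgeGraph F).Reachable a c := by
    intro c hc hac
    have hcb : c = b :=
      h.eq_of_reachable hc hb (reachable_insert_iff.2 (.inr (.inl ⟨hac.symm.trans hau, hwb⟩)))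
    exact hnuw (hau.symm.trans ((hcb ▸ hac).trans hwb.symm))
  refine ⟨hacyclic, fun c hc c' hc' hcc' => ?_, fun y => ?_⟩
  · obtain rfl | hcS := mem_insert.1 hc <;> obtain rfl | hcS' := mem_insert.1 hc'
    · rfl
    · exact absurd hcc' (a_apart _ hcS')
    · exact absurd hcc'.symm (a_apart _ hcS)
    · exact h.eq_of_reachable hcS hcS' (reachable_insert_iff.2 (.inl hcc'))
  · obtain ⟨c, hc, hyc⟩ := h.exists_reachable y
    obtain hyc | ⟨hyu, -⟩ | ⟨hyw, -⟩ := reachable_insert_iff.1 hyc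
    · exact ⟨c, mem_insert_of_mem hc, hyc⟩
    · exact ⟨a, mem_insert_self a S, hyu.trans hau.symm⟩
    · exact ⟨b, mem_insert_of_mem hb, hyw.trans hwb⟩

theorem IsRootedForest.insert_edge (h : IsRootedForest F (insert a S)) (ha : a ∉ S) (hb : b ∈ S)
    (hau : (edgeGraph F).Reachable a u) (hwb : (edgeGraph F).Reachable w b) :
    IsRootedForest (insert s(u, w) F) S := by
  have a_apart : ∀ c ∈ S, ¬ (edgeGraph F).Reachable a c :=
    fun c hc => h.not_reachable_of_notMem ha hc
  have hnuw : ¬ (edgeGraph F).Reachable u w := fun huw =>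
    a_apart b hb (hau.trans (huw.trans hwb))
  have hacyclic : (edgeGraph (insert s(u, w) F)).IsAcyclic := by
    rw [edgeGraph_insert]
    exact h.isAcyclic.sup_edge_of_not_reachable hnuw
  refine ⟨hacyclic, fun c hc c' hc' hcc' => ?_, fun y => ?_⟩
  · obtain hcc' | ⟨hcu, -⟩ | ⟨-, huc'⟩ := reachable_insert_iff.1 hcc'
    · exact h.eq_of_reachable (mem_insert_of_mem hc) (mem_insert_of_mem hc') hcc'
    · exact absurd (hau.trans hcu.symm) (a_apart c hc)
    · exact absurd (hau.trans huc') (a_apart c' hc')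
  · obtain ⟨c, hc, hyc⟩ := h.exists_reachable y
    obtain rfl | hc := mem_insert.1 hc
    · exact ⟨b, hb, reachable_insert_iff.2 (.inr (.inl ⟨hyc.trans hau, hwb⟩))⟩
    · exact ⟨c, hc, reachable_insert_iff.2 (.inl hyc)⟩

variable [Fintype V] {R : Type*} [CommRing R] (G : SimpleGraph V) [DecidableRel G.Adj]

open scoped Classical in
/-- The spanning forests of `G` rooted at `S`. -/
noncomputable def rootedForests (S : Finset V) : Finset (Finset (Sym2 V)) :=
  {F ∈ G.edgeFinset.powerset | IsRootedForest F S}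

variable {G}

omit [DecidableEq V] in
theorem mem_rootedForests : F ∈ rootedForests G S ↔ F ⊆ G.edgeFinset ∧ IsRootedForest F S := by
  classical rw [rootedForests, mem_filter, mem_powerset]

open scoped Classical in
theorem sum_rootedForests_reachable (ha : a ∉ S) (hb : b ∈ S) (W : Finset (Sym2 V) → R)
    (f : V → R) :
    ∑ F ∈ rootedForests G S with (edgeGraph F).Reachable a b, W F * (f a - f b) =
      ∑ H ∈ rootedForests G (insert a S),
        ∑ d : G.Dart with (edgeGraph H).Reachable a d.fst ∧ (edgeGraph H).Reachable d.snd b,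
          W (insert d.edge H) * (f d.fst - f d.snd) := by
  have expand : ∀ F ∈ ({F ∈ rootedForests G S | (edgeGraph F).Reachable a b} : Finset _),
      W F * (f a - f b) = ∑ d : G.Dart with d.edge ∈ F ∧
        (edgeGraph (F.erase d.edge)).Reachable a d.fst ∧
          (edgeGraph (F.erase d.edge)).Reachable d.snd b, W F * (f d.fst - f d.snd) := by
    intro F hF
    obtain ⟨hF, hab⟩ := mem_filter.1 hF
    obtain ⟨hFG, hF⟩ := mem_rootedForests.1 hF
    rw [← mul_sum, sum_darts_telescope (coe_subset.2 hFG |>.trans_eq G.coe_edgeFinset)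
      hF.isAcyclic hab]
  have avoids : ∀ H ∈ rootedForests G (insert a S), ∀ d : G.Dart, (edgeGraph H).Reachable a d.fst →
      (edgeGraph H).Reachable d.snd b → d.edge ∉ H := fun H hH d hau hwb hd =>
    (mem_rootedForests.1 hH).2.not_reachable_of_notMem ha hb
      (hau.trans ((reachable_of_edge_mem hd).trans hwb))
  rw [sum_congr rfl expand, sum_sigma', sum_sigma']
  refine sum_bij' (fun p _ => ⟨p.1.erase p.2.edge, p.2⟩) (fun p _ => ⟨insert p.2.edge p.1, p.2⟩)
    ?_ ?_ ?_ ?_ ?_ <;> rintro ⟨F, d⟩ h <;>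
    simp only [mem_sigma, mem_filter, mem_univ, true_and] at h ⊢
  · obtain ⟨⟨hF, -⟩, hd, hau, hwb⟩ := h
    obtain ⟨hFG, hF⟩ := mem_rootedForests.1 hF
    rw [← insert_erase hd] at hF
    exact ⟨mem_rootedForests.2 ⟨(erase_subset _ _).trans hFG,
      hF.of_insert_edge hb d.adj.ne (notMem_erase _ _) hau hwb⟩, hau, hwb⟩
  · obtain ⟨hF, hau, hwb⟩ := h
    rw [erase_insert (avoids F hF d hau hwb)]
    obtain ⟨hFG, hF⟩ := mem_rootedForests.1 hF
    exact ⟨⟨mem_rootedForests.2 ⟨insert_subset (mem_edgeFinset.2 d.edge_mem) hFG,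
      hF.insert_edge ha hb hau hwb⟩, reachable_insert_iff.2 (.inr (.inl ⟨hau, hwb⟩))⟩,
      mem_insert_self _ _, hau, hwb⟩
  · rw [insert_erase h.2.1]
  · rw [erase_insert (avoids F h.1 d h.2.1 h.2.2)]
  · rw [insert_erase h.2.1]

open scoped Classical in
theorem sum_sum_rootedForests_reachable (ha : a ∉ S) (W : Finset (Sym2 V) → R) (f : V → R) :
    ∑ b ∈ S, ∑ F ∈ rootedForests G S with (edgeGraph F).Reachable a b, W F * (f a - f b) =
      ∑ H ∈ rootedForests G (insert a S),
        ∑ d : G.Dart with (edgeGraph H).Reachable a d.fst ∧ ¬ (edgeGraph H).Reachable a d.snd,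
          W (insert d.edge H) * (f d.fst - f d.snd) := by
  rw [sum_congr rfl fun b hb => sum_rootedForests_reachable ha hb W f, sum_comm]
  refine sum_congr rfl fun H hH => ?_
  have hH := (mem_rootedForests.1 hH).2
  rw [← sum_biUnion]
  · refine sum_congr (Finset.ext fun d => ?_) fun _ _ => rfl
    simp only [mem_biUnion, mem_filter_univ, hH.not_reachable_iff_exists ha]
    exact ⟨fun ⟨b, hb, hau, hwb⟩ => ⟨hau, b, hb, hwb⟩, fun ⟨hau, b, hb, hwb⟩ => ⟨b, hb, hau, hwb⟩⟩
  · intro b hb b' hb' hne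
    refine disjoint_left.2 fun d hd hd' => hne ?_
    exact hH.eq_of_reachable (mem_insert_of_mem hb) (mem_insert_of_mem hb')
      ((mem_filter_univ d).1 hd |>.2.symm.trans ((mem_filter_univ d).1 hd').2)

end RootedForests

section Exchange

open SimpleGraph

variable {V : Type*} {F : Finset (Sym2 V)} {a y z : V}

/-- The indicator function of the tree of `F` containing `a`. -/
noncomputable def treeIndicator (R : Type*) [CommRing R] (F : Finset (Sym2 V)) (a : V) : V → R :=
  Set.indicator {y | (edgeGraph F).Reachable a y} 1

variable {R : Type*} [CommRing R]

theorem treeIndicator_of_reachable (h : (edgeGraph F).Reachable a y) :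
    treeIndicator R F a y = 1 :=
  Set.indicator_of_mem (Set.mem_ofPred.2 h) 1

theorem treeIndicator_of_not_reachable (h : ¬ (edgeGraph F).Reachable a y) :
    treeIndicator R F a y = 0 :=
  Set.indicator_of_notMem (Set.mem_ofPred.not.2 h) 1

theorem treeIndicator_congr (h : (edgeGraph F).Reachable y z) :
    treeIndicator R F a y = treeIndicator R F a z := by
  by_cases hy : (edgeGraph F).Reachable a y
  · rw [treeIndicator_of_reachable hy, treeIndicator_of_reachable (hy.trans h)]
  · rw [treeIndicator_of_not_reachable hy,
      treeIndicator_of_not_reachable fun hz => hy (hz.trans h.symm)]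

theorem treeIndicator_mul_one_sub :
    treeIndicator R F a y * (1 - treeIndicator R F a y) = 0 := by
  by_cases h : (edgeGraph F).Reachable a y
  · rw [treeIndicator_of_reachable h, sub_self, mul_zero]
  · rw [treeIndicator_of_not_reachable h, zero_mul]

theorem sum_darts_sub_symm {G : SimpleGraph V} [Fintype G.Dart] {M : Type*} [AddCommGroup M]
    (k : G.Dart → M) : ∑ d : G.Dart, (k d - k d.symm) = 0 := by
  rw [sum_sub_distrib, sub_eq_zero]
  exact (Equiv.sum_comp Dart.symm_involutive.toPerm k).symm

variable [DecidableEq V] [Fintype V] (G : SimpleGraph V) [DecidableRel G.Adj]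

/-- The monomial `∏_{e ∉ F} x_e` with which a spanning forest `F` of `G` enters a spanning forest
polynomial. -/
def forestMonomial (x : Sym2 V → R) (F : Finset (Sym2 V)) : R :=
  ∏ e ∈ G.edgeFinset \ F, x e

variable {G} (x : Sym2 V → R)

theorem forestMonomial_eq_mul {e : Sym2 V} (he : e ∈ G.edgeFinset) (hF : e ∉ F) :
    forestMonomial G x F = x e * forestMonomial G x (insert e F) := by
  rw [forestMonomial, forestMonomial, sdiff_insert,
    mul_prod_erase _ _ (mem_sdiff.2 ⟨he, hF⟩)]

variable (G) in
/-- The weight of the pairs obtained from `(H, S)` by adding to `H` an edge `d` that leaves the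
tree of `a` in `H`, signed by the direction in which `d` crosses the tree of `a` in `S`. -/
noncomputable def crossingWeight (a : V) (H S : Finset (Sym2 V)) : R :=
  ∑ d : G.Dart, treeIndicator R H a d.fst * (1 - treeIndicator R H a d.snd) *
    (treeIndicator R S a d.fst - treeIndicator R S a d.snd) *
      (forestMonomial G x (insert d.edge H) * forestMonomial G x S)

theorem crossing_mul_forestMonomial_comm (H S : Finset (Sym2 V)) (d : G.Dart) :
    treeIndicator R S a d.fst * (1 - treeIndicator R S a d.snd) *
      (treeIndicator R H a d.fst - treeIndicator R H a d.snd) *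
        (forestMonomial G x (insert d.edge S) * forestMonomial G x H) =
    treeIndicator R S a d.fst * (1 - treeIndicator R S a d.snd) *
      (treeIndicator R H a d.fst - treeIndicator R H a d.snd) *
        (forestMonomial G x (insert d.edge H) * forestMonomial G x S) := by
  by_cases hH : d.edge ∈ H
  · rw [treeIndicator_congr (reachable_of_edge_mem hH), sub_self, mul_zero, zero_mul, zero_mul]
  by_cases hS : d.edge ∈ S
  · rw [treeIndicator_congr (reachable_of_edge_mem hS), treeIndicator_mul_one_sub]
    simp only [zero_mul]
  have he : d.edge ∈ G.edgeFinset := mem_edgeFinset.2 d.edge_mem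
  rw [forestMonomial_eq_mul x he hH, forestMonomial_eq_mul x he hS]
  ring

theorem crossingWeight_comm (H S : Finset (Sym2 V)) :
    crossingWeight G x a H S = crossingWeight G x a S H := by
  -- With the weights symmetrised, the two summands differ by the antisymmetrisation in `d` of `k`.
  let k (d : G.Dart) : R := treeIndicator R H a d.snd * treeIndicator R S a d.fst *
    (1 - treeIndicator R H a d.fst - treeIndicator R S a d.snd) *
      (forestMonomial G x (insert d.edge H) * forestMonomial G x S)
  rw [← sub_eq_zero, crossingWeight, crossingWeight, ← sum_sub_distrib, ← sum_darts_sub_symm k]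
  refine sum_congr rfl fun d _ => ?_
  rw [crossing_mul_forestMonomial_comm x H S d]
  simp only [k, Dart.edge_symm, Dart.symm_toProd, Prod.fst_swap, Prod.snd_swap]
  ring

variable (G)

open scoped Classical in
/-- The spanning forest polynomial of the forests rooted at `S` in which `a` lies in the tree of the
root `b`. -/
noncomputable def joinedPoly (S : Finset V) (a b : V) : R :=
  ∑ F ∈ rootedForests G S with (edgeGraph F).Reachable a b, forestMonomial G x F

open scoped Classical in
/-- The spanning forest polynomial of the forests rooted at `S` and the further root `a` in which
`b` lies outside the tree of `a`. -/
noncomputable def separatedPoly (S : Finset V) (a b : V) : R :=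
  ∑ F ∈ rootedForests G (insert a S) with ¬ (edgeGraph F).Reachable a b, forestMonomial G x F

variable {G} {S : Finset V}

theorem separatedPoly_eq_sum (S : Finset V) (a b : V) :
    separatedPoly G x S a b = ∑ F ∈ rootedForests G (insert a S),
      (treeIndicator R F a a - treeIndicator R F a b) * forestMonomial G x F := by
  classical
  rw [separatedPoly, sum_filter]
  refine sum_congr rfl fun F _ => ?_
  rw [treeIndicator_of_reachable (.refl a)]
  by_cases h : (edgeGraph F).Reachable a b
  · rw [if_neg (not_not.2 h), treeIndicator_of_reachable h, sub_self, zero_mul]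
  · rw [if_pos h, treeIndicator_of_not_reachable h, sub_zero, one_mul]

theorem sum_joinedPoly_mul_separatedPoly {A : Finset V} (ha : a ∉ A) (B : Finset V) :
    ∑ b ∈ A, joinedPoly G x A a b * separatedPoly G x B a b =
      ∑ H ∈ rootedForests G (insert a A), ∑ S ∈ rootedForests G (insert a B),
        crossingWeight G x a H S := by
  classical
  calc ∑ b ∈ A, joinedPoly G x A a b * separatedPoly G x B a b
    _ = ∑ S ∈ rootedForests G (insert a B),
          (∑ b ∈ A, ∑ F ∈ rootedForests G A with (edgeGraph F).Reachable a b,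
            forestMonomial G x F * (treeIndicator R S a a - treeIndicator R S a b)) *
              forestMonomial G x S := by
        simp only [separatedPoly_eq_sum, joinedPoly, mul_sum, sum_mul, mul_assoc]
        exact sum_comm
    _ = ∑ S ∈ rootedForests G (insert a B), ∑ H ∈ rootedForests G (insert a A),
          crossingWeight G x a H S := by
        refine sum_congr rfl fun S _ => ?_
        rw [sum_sum_rootedForests_reachable ha, sum_mul]
        refine sum_congr rfl fun H _ => ?_
        rw [sum_mul, sum_filter, crossingWeight]
        refine sum_congr rfl fun d _ => ?_
        by_cases hu : (edgeGraph H).Reachable a d.fst <;>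
          by_cases hw : (edgeGraph H).Reachable a d.snd <;>
            simp only [hu, hw, treeIndicator_of_reachable, treeIndicator_of_not_reachable,
              not_true_eq_false, not_false_eq_true, and_true, and_false, if_true, if_false,
              sub_self, sub_zero, mul_zero, zero_mul]
        ring
    _ = _ := sum_comm

theorem sum_joinedPoly_mul_separatedPoly_comm {A B : Finset V} (hA : a ∉ A) (hB : a ∉ B) :
    ∑ b ∈ A, joinedPoly G x A a b * separatedPoly G x B a b =
      ∑ b ∈ B, joinedPoly G x B a b * separatedPoly G x A a b := by
  rw [sum_joinedPoly_mul_separatedPoly x hA, sum_joinedPoly_mul_separatedPoly x hB, sum_comm]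
  simp only [crossingWeight_comm]

end Exchange

section Partitions

open SimpleGraph

variable {V : Type*}

theorem isRootedForest_singleton_congr {F : Finset (Sym2 V)} (a b : V)
    (h : IsRootedForest F {a}) : IsRootedForest F {b} := by
  have reach (y : V) : (edgeGraph F).Reachable y a := by
    simpa only [mem_singleton, exists_eq_left] using h.exists_reachable y
  refine ⟨h.isAcyclic, fun c hc d hd _ => ?_, fun y => ⟨b, mem_singleton_self b, ?_⟩⟩
  · rw [mem_singleton.1 hc, mem_singleton.1 hd]
  · exact (reach y).trans (reach b).symm

variable [Fintype V] [DecidableEq V] {R : Type*} [CommRing R]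

variable (G : SimpleGraph V) [DecidableRel G.Adj] (x : Sym2 V → R)

/-- The spanning forest polynomial of all forests rooted at `S`. -/
noncomputable def rootedForestPoly (S : Finset V) : R :=
  ∑ F ∈ rootedForests G S, forestMonomial G x F

theorem rootedForestPoly_singleton_congr (a b : V) :
    rootedForestPoly G x {a} = rootedForestPoly G x {b} := by
  rw [rootedForestPoly, rootedForestPoly]
  refine sum_congr (Finset.ext fun F => ?_) fun _ _ => rfl
  simp only [mem_rootedForests]
  exact and_congr_right' ⟨isRootedForest_singleton_congr a b, isRootedForest_singleton_congr b a⟩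

theorem joinedPoly_singleton (a b : V) : joinedPoly G x {b} a b = rootedForestPoly G x {b} := by
  rw [joinedPoly, rootedForestPoly, filter_true_of_mem fun F hF => ?_]
  simpa only [mem_singleton, exists_eq_left] using (mem_rootedForests.1 hF).2.exists_reachable a

theorem separatedPoly_of_mem {S : Finset V} {a b : V} (ha : a ∉ S) (hb : b ∈ S) :
    separatedPoly G x S a b = rootedForestPoly G x (insert a S) := by
  rw [separatedPoly, rootedForestPoly, filter_true_of_mem fun F hF => ?_]
  exact (mem_rootedForests.1 hF).2.not_reachable_of_notMem ha hb

theorem rootedForestPoly_mul_rootedForestPoly_eq_sum {S : Finset V} {a b : V} (ha : a ∉ S)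
    (hb : b ∈ S) : rootedForestPoly G x {b} * rootedForestPoly G x (insert a S) =
      ∑ c ∈ S, joinedPoly G x S a c * separatedPoly G x {b} a c := by
  have hab : a ∉ ({b} : Finset V) := mem_singleton.not.2 fun h => ha (h ▸ hb)
  rw [← sum_joinedPoly_mul_separatedPoly_comm x hab ha, sum_singleton, joinedPoly_singleton,
    separatedPoly_of_mem G x ha hb]

variable {m : ℕ}

/-- The marked vertices in `T` represent the parts of the partition `p`, one for each part. -/
def IsTransversal (T : Finset (Fin m)) (p : Fin m → Option ℕ) : Prop :=
  (∀ i ∈ T, ∀ j ∈ T, p i = p j → i = j) ∧ ∀ i, ∃ j ∈ T, p i = p j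

instance (T : Finset (Fin m)) (p : Fin m → Option ℕ) : Decidable (IsTransversal T p) :=
  inferInstanceAs (Decidable (_ ∧ _))

/-- The family `P` lists the partitions of all `m` marked vertices into `t` parts, each of them
once. -/
structure ListsPartitions {I : Type*} (P : I → Fin m → Option ℕ) (t : ℕ) : Prop where
  ne_none : ∀ a i, P a i ≠ none
  eq_of_forall_iff : ∀ a b, (∀ i j, P a i = P a j ↔ P b i = P b j) → a = b
  exists_forall_iff : ∀ L : Fin m → Fin m, #(univ.image L) = t →
    ∃ a, ∀ i j, P a i = P a j ↔ L i = L j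

theorem listsPartitions_Apart4 : ListsPartitions Apart4 3 :=
  ⟨by decide, by decide, by decide +kernel⟩

theorem listsPartitions_Bpart4 : ListsPartitions Bpart4 2 :=
  ⟨by decide, by decide, by decide +kernel⟩

variable {G} {v : Fin m → V} {p : Fin m → Option ℕ} {F : Finset (Sym2 V)}

omit [DecidableRel G.Adj] in
theorem isCompatibleForest_iff (hp : ∀ i, p i ≠ none) :
    IsCompatibleForest G v p F ↔ (F : Set (Sym2 V)) ⊆ G.edgeSet ∧ (edgeGraph F).IsAcyclic ∧
      (∀ i j, (edgeGraph F).Reachable (v i) (v j) ↔ p i = p j) ∧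
        ∀ w, ∃ i, (edgeGraph F).Reachable w (v i) := by
  rw [IsCompatibleForest]
  simp only [hp, ne_eq, not_false_eq_true, true_and, forall_const]

omit [DecidableRel G.Adj] in
theorem IsCompatibleForest.isRootedForest_image_iff (h : IsCompatibleForest G v p F)
    (hp : ∀ i, p i ≠ none) (hv : Function.Injective v) {T : Finset (Fin m)} :
    IsRootedForest F (T.image v) ↔ IsTransversal T p := by
  obtain ⟨-, hacyclic, hker, hspan⟩ := (isCompatibleForest_iff hp).1 h
  constructor
  · refine fun hF => ⟨fun i hi j hj hij => hv ?_, fun i => ?_⟩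
    · exact hF.eq_of_reachable (mem_image_of_mem v hi) (mem_image_of_mem v hj) ((hker i j).2 hij)
    · obtain ⟨j, hj, hij⟩ := exists_mem_image.1 (hF.exists_reachable (v i))
      exact ⟨j, hj, (hker i j).1 hij⟩
  · refine fun ⟨hinj, hsurj⟩ => ⟨hacyclic, ?_, fun w => ?_⟩
    · simp only [forall_mem_image, hker]
      exact fun i hi j hj hij => congrArg v (hinj i hi j hj hij)
    · obtain ⟨i, hi⟩ := hspan w
      obtain ⟨j, hj, hij⟩ := hsurj i
      exact ⟨v j, mem_image_of_mem v hj, hi.trans ((hker i j).2 hij)⟩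

omit [DecidableRel G.Adj] in
theorem ListsPartitions.exists_isCompatibleForest {I : Type*} {P : I → Fin m → Option ℕ}
    {T : Finset (Fin m)} (hP : ListsPartitions P #T) (hv : Function.Injective v)
    (hFG : (F : Set (Sym2 V)) ⊆ G.edgeSet) (hF : IsRootedForest F (T.image v)) :
    ∃ a, IsCompatibleForest G v (P a) F := by
  have exists_root (i : Fin m) : ∃ j ∈ T, (edgeGraph F).Reachable (v i) (v j) := by
    simpa only [exists_mem_image] using hF.exists_reachable (v i)
  choose root root_mem reachable_root using exists_root
  have root_eq_iff (i j : Fin m) : root i = root j ↔ (edgeGraph F).Reachable (v i) (v j) := by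
    refine ⟨fun h => (reachable_root i).trans (h ▸ (reachable_root j).symm), fun h => hv ?_⟩
    exact hF.eq_of_reachable (mem_image_of_mem v (root_mem i)) (mem_image_of_mem v (root_mem j))
      ((reachable_root i).symm.trans (h.trans (reachable_root j)))
  have image_root : univ.image root = T := by
    refine Finset.Subset.antisymm (image_subset_iff.2 fun i _ => root_mem i) fun i hi => ?_
    refine mem_image.2 ⟨i, mem_univ i, hv ?_⟩
    exact hF.eq_of_reachable (mem_image_of_mem v (root_mem i)) (mem_image_of_mem v hi)
      (reachable_root i).symm
  obtain ⟨a, ha⟩ := hP.exists_forall_iff root (congrArg card image_root)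
  refine ⟨a, (isCompatibleForest_iff (hP.ne_none a)).2 ⟨hFG, hF.isAcyclic, fun i j => ?_,
    fun w => ?_⟩⟩
  · rw [ha, root_eq_iff]
  · obtain ⟨y, hy, hwy⟩ := hF.exists_reachable w
    obtain ⟨j, -, rfl⟩ := mem_image.1 hy
    exact ⟨j, hwy⟩

open scoped Classical in
theorem forestPoly_eq_sum_filter (p : Fin m → Option ℕ) : forestPoly G x v p =
    ∑ F ∈ G.edgeFinset.powerset with IsCompatibleForest G v p F, forestMonomial G x F := by
  rw [forestPoly, sum_filter]
  simp only [forestMonomial]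

open scoped Classical in
theorem ListsPartitions.sum_rootedForests_filter {I : Type*} [Fintype I]
    {P : I → Fin m → Option ℕ} {T : Finset (Fin m)} (hP : ListsPartitions P #T)
    (hv : Function.Injective v) {q : Finset (Sym2 V) → Prop} {r : I → Prop}
    (hqr : ∀ F a, IsCompatibleForest G v (P a) F → (q F ↔ r a)) :
    ∑ F ∈ rootedForests G (T.image v) with q F, forestMonomial G x F =
      ∑ a with IsTransversal T (P a) ∧ r a, forestPoly G x v (P a) := by
  simp only [forestPoly_eq_sum_filter]
  rw [← sum_biUnion]
  · refine sum_congr (Finset.ext fun F => ?_) fun _ _ => rfl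
    simp only [mem_filter, mem_biUnion, mem_rootedForests, mem_powerset, mem_univ, true_and]
    constructor
    · rintro ⟨⟨hFG, hF⟩, hq⟩
      obtain ⟨a, ha⟩ := hP.exists_isCompatibleForest hv
        (coe_subset.2 hFG |>.trans_eq G.coe_edgeFinset) hF
      exact ⟨a, ⟨(ha.isRootedForest_image_iff (hP.ne_none a) hv).1 hF, (hqr F a ha).1 hq⟩, hFG, ha⟩
    · rintro ⟨a, ⟨hT, hr⟩, hFG, ha⟩
      exact ⟨⟨hFG, (ha.isRootedForest_image_iff (hP.ne_none a) hv).2 hT⟩, (hqr F a ha).2 hr⟩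
  · intro a _ b _ hab
    refine disjoint_left.2 fun F hFa hFb => hab (hP.eq_of_forall_iff a b fun i j => ?_)
    have ha := (isCompatibleForest_iff (hP.ne_none a)).1 (mem_filter.1 hFa).2
    have hb := (isCompatibleForest_iff (hP.ne_none b)).1 (mem_filter.1 hFb).2
    rw [← ha.2.2.1, ← hb.2.2.1]

theorem ListsPartitions.joinedPoly_image {I : Type*} [Fintype I]
    {P : I → Fin m → Option ℕ} {T : Finset (Fin m)} (hP : ListsPartitions P #T)
    (hv : Function.Injective v) (j k : Fin m) :
    joinedPoly G x (T.image v) (v j) (v k) =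
      ∑ a with IsTransversal T (P a) ∧ P a j = P a k, forestPoly G x v (P a) := by
  classical
  rw [joinedPoly]
  convert hP.sum_rootedForests_filter x hv fun F a ha =>
    ((isCompatibleForest_iff (hP.ne_none a)).1 ha).2.2.1 j k

theorem ListsPartitions.separatedPoly_image {I : Type*} [Fintype I]
    {P : I → Fin m → Option ℕ} {T : Finset (Fin m)} {j : Fin m}
    (hP : ListsPartitions P #(insert j T)) (hv : Function.Injective v) (k : Fin m) :
    separatedPoly G x (T.image v) (v j) (v k) =
      ∑ a with IsTransversal (insert j T) (P a) ∧ P a j ≠ P a k, forestPoly G x v (P a) := by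
  classical
  rw [separatedPoly, ← image_insert]
  convert hP.sum_rootedForests_filter x hv fun F a ha =>
    (((isCompatibleForest_iff (hP.ne_none a)).1 ha).2.2.1 j k).not

variable {I J : Type*} (P : I → Fin m → Option ℕ) (Q : J → Fin m → Option ℕ)

/-- The coefficient of `A_a B_b` in the column expansion identity for `Φ_{all joined} Φ_{all apart}`
along the marked vertex `j`, with `c` the root of the other factor: the number of marked vertices
`k` which may carry the tree of `j` in `A_a` and lie outside the tree of `j` in `B_b`. -/
def exchangeCoeff (j c : Fin m) (q : I × J) : ℕ :=
  #{k ∈ univ.erase j | (IsTransversal (univ.erase j) (P q.1) ∧ P q.1 j = P q.1 k) ∧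
    IsTransversal {j, c} (Q q.2) ∧ Q q.2 j ≠ Q q.2 k}

variable {P Q}

theorem sum_exchangeCoeff_mul_forestPoly [Fintype I] [Fintype J] (hP : ListsPartitions P (m - 1))
    (hQ : ListsPartitions Q 2) (hv : Function.Injective v) {j c : Fin m} (hjc : j ≠ c) :
    ∑ q, exchangeCoeff P Q j c q * (forestPoly G x v (P q.1) * forestPoly G x v (Q q.2)) =
      rootedForestPoly G x {v c} * rootedForestPoly G x (univ.image v) := by
  have hP' : ListsPartitions P #(univ.erase j) := by
    rwa [card_erase_of_mem (mem_univ j), card_univ, Fintype.card_fin]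
  have hQ' : ListsPartitions Q #{j, c} := by rwa [card_pair hjc]
  have hj : v j ∉ (univ.erase j).image v := by
    rw [hv.mem_finset_image]
    exact notMem_erase j univ
  have hc : v c ∈ (univ.erase j).image v := mem_image_of_mem v (mem_erase.2 ⟨hjc.symm, mem_univ c⟩)
  have image_eq : univ.image v = insert (v j) ((univ.erase j).image v) := by
    rw [← image_insert, insert_erase (mem_univ j)]
  symm
  calc rootedForestPoly G x {v c} * rootedForestPoly G x (univ.image v)
    _ = ∑ k ∈ univ.erase j, joinedPoly G x ((univ.erase j).image v) (v j) (v k) *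
          separatedPoly G x (image v {c}) (v j) (v k) := by
        rw [image_eq, rootedForestPoly_mul_rootedForestPoly_eq_sum G x hj hc, sum_image hv.injOn,
          image_singleton]
    _ = ∑ k ∈ univ.erase j, ∑ q : I × J,
          if (IsTransversal (univ.erase j) (P q.1) ∧ P q.1 j = P q.1 k) ∧
            IsTransversal {j, c} (Q q.2) ∧ Q q.2 j ≠ Q q.2 k then
            forestPoly G x v (P q.1) * forestPoly G x v (Q q.2) else 0 := by
        refine sum_congr rfl fun k _ => ?_
        rw [hP'.joinedPoly_image x hv, hQ'.separatedPoly_image x hv, sum_mul_sum, ← sum_product',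
          ← filter_product, univ_product_univ, sum_filter]
    _ = _ := by
        rw [sum_comm]
        refine sum_congr rfl fun q _ => ?_
        rw [← sum_filter, sum_const, nsmul_eq_mul, exchangeCoeff]

end Partitions

section SpanningFamily

/-- The eight differences `L_{4,c}(j) - L_{4,4}(3)` forming the basis of `X₄`. -/
def X4Basis : Fin 8 → Fin 6 × Fin 7 → ℚ :=
  ![L441 - L443, L442 - L443, L431 - L443, L432 - L443,
    L421 - L443, L422 - L443, L411 - L443, L412 - L443]

/-- The marked vertices `j` and `c`, counted from `0`, for which the minuend of `X4Basis i` is the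
column expansion identity of `exchangeCoeff`. -/
def expansionIndex : Fin 8 → Fin 4 × Fin 4 :=
  ![(0, 3), (1, 3), (0, 2), (1, 2), (0, 1), (2, 1), (1, 0), (2, 0)]

theorem X4Basis_apply (i : Fin 8) (q : Fin 6 × Fin 7) :
    X4Basis i q = exchangeCoeff Apart4 Bpart4 (expansionIndex i).1 (expansionIndex i).2 q -
      exchangeCoeff Apart4 Bpart4 2 3 q := by
  revert i q
  decide +kernel

/-- The space `X₄`. -/
def X4 : Submodule ℚ (Fin 6 × Fin 7 → ℚ) where
  carrier := {α | MemX4 α}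
  zero_mem' := fun V _ _ G _ x v _ => by simp
  add_mem' := fun {α β} hα hβ V _ _ G _ x v hv => by
    simp only [Pi.add_apply, add_mul, sum_add_distrib, hα V G x v hv, hβ V G x v hv, add_zero]
  smul_mem' := fun c α hα V _ _ G _ x v hv => by
    simp only [Pi.smul_apply, smul_eq_mul, mul_assoc, ← mul_sum, hα V G x v hv, mul_zero]

theorem X4Basis_mem (i : Fin 8) : X4Basis i ∈ X4 := by
  intro V _ _ G _ x v hv
  have index_ne : ∀ i, (expansionIndex i).1 ≠ (expansionIndex i).2 := by decide
  simp only [X4Basis_apply, sub_mul, sum_sub_distrib]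
  rw [sum_exchangeCoeff_mul_forestPoly x listsPartitions_Apart4 listsPartitions_Bpart4 hv
      (index_ne i),
    sum_exchangeCoeff_mul_forestPoly x listsPartitions_Apart4 listsPartitions_Bpart4 hv
      (by decide), rootedForestPoly_singleton_congr G x (v _) (v 3), sub_self]

end SpanningFamily

section AcyclicGraphs

open SimpleGraph

variable {m : ℕ} {R : Type*} [CommRing R] {G : SimpleGraph (Fin m)} [DecidableRel G.Adj]
  {p : Fin m → Option ℕ} {F : Finset (Sym2 (Fin m))}

variable (G p) in
/-- The edges of `G` with both ends in the same part of the partition `p`. -/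
def innerEdges : Finset (Sym2 (Fin m)) := {e ∈ G.edgeFinset | (e.map p).IsDiag}

theorem mk_mem_innerEdges {i j : Fin m} : s(i, j) ∈ innerEdges G p ↔ G.Adj i j ∧ p i = p j := by
  rw [innerEdges, mem_filter, mem_edgeFinset, mem_edgeSet, Sym2.map_mk, Sym2.mk_isDiag_iff]

theorem IsCompatibleForest.eq_innerEdges (hG : G.IsAcyclic) (hp : ∀ i, p i ≠ none)
    (hF : IsCompatibleForest G id p F) : F = innerEdges G p := by
  obtain ⟨hFG, -, hker, -⟩ := (isCompatibleForest_iff hp).1 hF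
  ext e
  induction e with | h i j
  rw [mk_mem_innerEdges, ← hker]
  refine ⟨fun he => ⟨hFG he, Adj.reachable ((fromEdgeSet_adj _).2 ⟨he, G.ne_of_adj (hFG he)⟩)⟩,
    fun ⟨hij, hreach⟩ => ?_⟩
  by_contra he
  refine isBridge_iff.1 (isAcyclic_iff_forall_adj_isBridge.1 hG hij) (hreach.mono fun a b hab => ?_)
  obtain ⟨hab, -⟩ := (fromEdgeSet_adj _).1 hab
  exact deleteEdges_adj.2 ⟨hFG hab, fun h => he (Set.mem_singleton_iff.1 h ▸ hab)⟩

theorem isCompatibleForest_innerEdges_iff (hG : G.IsAcyclic) (hp : ∀ i, p i ≠ none) :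
    IsCompatibleForest G id p (innerEdges G p) ↔
      ∀ i j, (edgeGraph (innerEdges G p)).Reachable i j ↔ p i = p j := by
  have hsub : (innerEdges G p : Set (Sym2 (Fin m))) ⊆ G.edgeSet := fun e he =>
    mem_edgeFinset.1 (mem_filter.1 he).1
  have hle : edgeGraph (innerEdges G p) ≤ G :=
    (fromEdgeSet_mono hsub).trans_eq (fromEdgeSet_edgeSet G)
  rw [isCompatibleForest_iff hp]
  exact ⟨fun h => h.2.2.1, fun h => ⟨hsub, hG.anti hle, h, fun i => ⟨i, .rfl⟩⟩⟩

open scoped Classical in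
theorem forestPoly_of_isAcyclic (hG : G.IsAcyclic) (x : Sym2 (Fin m) → R) (hp : ∀ i, p i ≠ none) :
    forestPoly G x id p = if ∀ i j, (edgeGraph (innerEdges G p)).Reachable i j ↔ p i = p j then
      forestMonomial G x (innerEdges G p) else 0 := by
  rw [forestPoly_eq_sum_filter, sum_filter, sum_eq_single (innerEdges G p)]
  · exact if_congr (isCompatibleForest_innerEdges_iff hG hp) rfl rfl
  · exact fun F _ hF => if_neg fun h => hF (h.eq_innerEdges hG hp)
  · exact fun h => absurd (mem_powerset.2 (filter_subset _ _)) h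

end AcyclicGraphs

section EdgeLists

open SimpleGraph

variable {V : Type*}

/-- Decidable form of reachability along the edges listed in `l`. -/
def Linked : List (V × V) → V → V → Prop
  | [], a, b => a = b
  | d :: l, a, b =>
    Linked l a b ∨ (Linked l a d.1 ∧ Linked l d.2 b) ∨ (Linked l a d.2 ∧ Linked l d.1 b)

/-- Decidable form of acyclicity of the graph with the edges listed in `l`, each of them once. -/
def IsForestList : List (V × V) → Prop
  | [] => True
  | d :: l => IsForestList l ∧ ¬ Linked l d.1 d.2

variable [DecidableEq V]

instance Linked.instDecidable : ∀ (l : List (V × V)) (a b : V), Decidable (Linked l a b)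
  | [], a, b => inferInstanceAs (Decidable (a = b))
  | _ :: l, a, b =>
    have := Linked.instDecidable l
    inferInstanceAs (Decidable (Linked l a b ∨ _ ∧ _ ∨ _ ∧ _))

instance IsForestList.instDecidable : ∀ l : List (V × V), Decidable (IsForestList l)
  | [] => inferInstanceAs (Decidable True)
  | _ :: l =>
    have := IsForestList.instDecidable l
    inferInstanceAs (Decidable (_ ∧ ¬ Linked l _ _))

/-- The set of the edges listed in `l`. -/
def edgesOf (l : List (V × V)) : Finset (Sym2 V) := (l.map fun d => s(d.1, d.2)).toFinset

theorem mem_edgesOf {l : List (V × V)} {e : Sym2 V} :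
    e ∈ edgesOf l ↔ ∃ d ∈ l, s(d.1, d.2) = e := by
  rw [edgesOf, List.mem_toFinset, List.mem_map]

theorem edgesOf_cons (d : V × V) (l : List (V × V)) :
    edgesOf (d :: l) = insert s(d.1, d.2) (edgesOf l) := by
  rw [edgesOf, List.map_cons, List.toFinset_cons, edgesOf]

theorem reachable_edgesOf_iff {l : List (V × V)} {a b : V} :
    (edgeGraph (edgesOf l)).Reachable a b ↔ Linked l a b := by
  induction l generalizing a b with
  | nil => simp [edgesOf, edgeGraph, Linked]
  | cons d l ih => simp only [edgesOf_cons, reachable_insert_iff, ih, Linked]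

theorem IsForestList.isAcyclic {l : List (V × V)} (hl : IsForestList l) :
    (edgeGraph (edgesOf l)).IsAcyclic := by
  induction l with
  | nil => simp [edgesOf, edgeGraph]
  | cons d l ih =>
    rw [edgesOf_cons, edgeGraph_insert]
    exact (ih hl.1).sup_edge_of_not_reachable (reachable_edgesOf_iff.not.2 hl.2)

theorem IsForestList.not_isDiag {l : List (V × V)} (hl : IsForestList l) :
    ∀ e ∈ edgesOf l, ¬ e.IsDiag := by
  induction l with
  | nil => simp [edgesOf]
  | cons d l ih =>
    rw [edgesOf_cons, forall_mem_insert, Sym2.mk_isDiag_iff]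
    exact ⟨fun h => hl.2 (reachable_edgesOf_iff.1 (h ▸ .rfl)), ih hl.1⟩

theorem IsForestList.edgeFinset_eq {l : List (V × V)} (hl : IsForestList l)
    {_ : Fintype (edgeGraph (edgesOf l)).edgeSet} :
    (edgeGraph (edgesOf l)).edgeFinset = edgesOf l := by
  rw [← coe_inj, coe_edgeFinset, edgeSet_fromEdgeSet, sdiff_eq_left]
  exact Set.disjoint_left.2 hl.not_isDiag

end EdgeLists

section ForestLists

open SimpleGraph

variable {m : ℕ} {K l : List (Fin m × Fin m)} {p : Fin m → Option ℕ}

/-- In the forest with the edges listed in `K ++ l`, the partition `p` joins the ends of each edge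
of `K`, and its parts are exactly the classes linked by those edges it joins the ends of. -/
def Realizes (K l : List (Fin m × Fin m)) (p : Fin m → Option ℕ) : Prop :=
  (∀ d ∈ K, p d.1 = p d.2) ∧
    ∀ i j, Linked ((K ++ l).filter fun d => p d.1 = p d.2) i j ↔ p i = p j

instance (K l : List (Fin m × Fin m)) (p : Fin m → Option ℕ) : Decidable (Realizes K l p) :=
  inferInstanceAs (Decidable (_ ∧ _))

theorem innerEdges_edgesOf (hl : IsForestList l) [DecidableRel (edgeGraph (edgesOf l)).Adj] :
    innerEdges (edgeGraph (edgesOf l)) p = edgesOf (l.filter fun d => p d.1 = p d.2) := by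
  ext e
  rw [innerEdges, hl.edgeFinset_eq]
  simp only [mem_filter, mem_edgesOf, List.mem_filter, decide_eq_true_eq]
  constructor
  · rintro ⟨⟨d, hd, rfl⟩, hdiag⟩
    exact ⟨d, ⟨hd, Sym2.mk_isDiag_iff.1 hdiag⟩, rfl⟩
  · rintro ⟨d, ⟨hd, hinner⟩, rfl⟩
    exact ⟨⟨d, hd, rfl⟩, Sym2.mk_isDiag_iff.2 hinner⟩

theorem forestPoly_edgesOf (hl : IsForestList (K ++ l))
    [DecidableRel (edgeGraph (edgesOf (K ++ l))).Adj] (hp : ∀ i, p i ≠ none) :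
    forestPoly (edgeGraph (edgesOf (K ++ l))) (fun e => if e ∉ edgesOf K then (1 : ℚ) else 0) id p =
      if Realizes K l p then 1 else 0 := by
  have sdiff_inner : edgesOf (K ++ l) \ innerEdges (edgeGraph (edgesOf (K ++ l))) p =
      {e ∈ edgesOf (K ++ l) | ¬ (e.map p).IsDiag} := by
    rw [innerEdges, hl.edgeFinset_eq, ← filter_not]
  have cut_iff : (∀ e ∈ ({e ∈ edgesOf (K ++ l) | ¬ (e.map p).IsDiag} : Finset _), e ∉ edgesOf K) ↔
      ∀ d ∈ K, p d.1 = p d.2 := by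
    simp only [mem_filter, mem_edgesOf, List.mem_append]
    constructor
    · intro h d hd
      by_contra hne
      exact h s(d.1, d.2) ⟨⟨d, .inl hd, rfl⟩, Sym2.mk_isDiag_iff.not.2 hne⟩ ⟨d, hd, rfl⟩
    · rintro h _ ⟨-, hne⟩ ⟨d, hd, rfl⟩
      exact hne (Sym2.mk_isDiag_iff.2 (h d hd))
  rw [forestPoly_of_isAcyclic hl.isAcyclic _ hp, forestMonomial, hl.edgeFinset_eq, sdiff_inner,
    prod_ite_zero, prod_const_one, innerEdges_edgesOf hl]
  simp only [reachable_edgesOf_iff, cut_iff, ← ite_and, Realizes, and_comm]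

end ForestLists

section FourVertices

variable {α : Fin 6 × Fin 7 → ℚ}

theorem sum_realizes_eq_zero (hα : MemX4 α) {K l : List (Fin 4 × Fin 4)}
    (hl : IsForestList (K ++ l)) :
    ∑ q with Realizes K l (Apart4 q.1) ∧ Realizes K l (Bpart4 q.2), α q = 0 := by
  classical
  rw [sum_filter]
  refine (sum_congr rfl fun q _ => ?_).trans (hα (Fin 4) (edgeGraph (edgesOf (K ++ l)))
    (fun e => if e ∉ edgesOf K then 1 else 0) id Function.injective_id)
  rw [forestPoly_edgesOf hl (listsPartitions_Apart4.ne_none q.1),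
    forestPoly_edgesOf hl (listsPartitions_Bpart4.ne_none q.2), ite_zero_mul_ite_zero, mul_ite,
    one_mul, mul_one, mul_zero]

/-- The two marked vertices joined by the partition `A_e`, seen as an edge of the complete graph on
the marked vertices. -/
def joinedPair : Fin 6 → Fin 4 × Fin 4 := ![(0, 1), (0, 2), (1, 2), (0, 3), (1, 3), (2, 3)]

/-- The index `b` for which `B_b` is the join of `A_e` and `A_f`, where `e ≠ f`; the value on the
diagonal is irrelevant. -/
def joinIndex : Fin 6 → Fin 6 → Fin 7 :=
  ![![0, 0, 0, 1, 1, 4], ![0, 0, 0, 2, 5, 2], ![0, 0, 0, 6, 3, 3],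
    ![1, 2, 6, 0, 1, 2], ![1, 5, 3, 1, 0, 3], ![4, 2, 3, 2, 3, 0]]

theorem realizes_pair_iff : ∀ {e f : Fin 6}, e ≠ f →
    (∀ a, Realizes [joinedPair e] [joinedPair f] (Apart4 a) ↔ a = e) ∧
      ∀ b, Realizes [joinedPair e] [joinedPair f] (Bpart4 b) ↔ b = joinIndex e f := by
  decide +kernel

theorem coeff_joinIndex_eq_zero (hα : MemX4 α) {e f : Fin 6} (hef : e ≠ f) :
    α (e, joinIndex e f) = 0 := by
  have forest : ∀ e f, e ≠ f → IsForestList ([joinedPair e] ++ [joinedPair f]) := by decide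
  obtain ⟨iff_A, iff_B⟩ := realizes_pair_iff hef
  simpa only [iff_A, iff_B, ← Prod.mk_inj, Prod.mk.eta, filter_eq', mem_univ, if_true,
    sum_singleton] using sum_realizes_eq_zero hα (forest e f hef)

theorem realizes_Apart4_tree_iff : ∀ {e f g : Fin 6}, e < f → f < g →
    IsForestList [joinedPair e, joinedPair f, joinedPair g] →
      ∀ a, Realizes [] [joinedPair e, joinedPair f, joinedPair g] (Apart4 a) ↔
        a ∈ ({e, f, g} : Finset _) := by
  decide +kernel

theorem realizes_Bpart4_tree_iff : ∀ {e f g : Fin 6}, e < f → f < g →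
    IsForestList [joinedPair e, joinedPair f, joinedPair g] →
      ∀ b, Realizes [] [joinedPair e, joinedPair f, joinedPair g] (Bpart4 b) ↔
        b ∈ ({joinIndex f g, joinIndex e g, joinIndex e f} : Finset _) := by
  decide +kernel

theorem joinIndex_distinct_of_tree : ∀ {e f g : Fin 6}, e < f → f < g →
    IsForestList [joinedPair e, joinedPair f, joinedPair g] →
      joinIndex f g ∉ ({joinIndex e g, joinIndex e f} : Finset _) ∧
        joinIndex e g ≠ joinIndex e f := by
  decide +kernel

theorem coeff_add_coeff_add_coeff_eq_zero (hα : MemX4 α) {e f g : Fin 6} (hef : e < f)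
    (hfg : f < g) (htree : IsForestList [joinedPair e, joinedPair f, joinedPair g]) :
    α (e, joinIndex f g) + α (f, joinIndex e g) + α (g, joinIndex e f) = 0 := by
  have heg := hef.trans hfg
  have joinIndex_comm : ∀ e f, joinIndex e f = joinIndex f e := by decide
  obtain ⟨join_fg_notMem, join_ne⟩ := joinIndex_distinct_of_tree hef hfg htree
  have sum_eq_zero := sum_realizes_eq_zero hα (K := []) htree
  simp only [realizes_Apart4_tree_iff hef hfg htree,
    realizes_Bpart4_tree_iff hef hfg htree] at sum_eq_zero
  rw [← univ_product_univ, filter_product (· ∈ ({e, f, g} : Finset _))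
    (· ∈ ({joinIndex f g, joinIndex e g, joinIndex e f} : Finset _)), filter_univ_mem,
    filter_univ_mem, sum_product] at sum_eq_zero
  have row_sum (a : Fin 6) : ∑ b ∈ {joinIndex f g, joinIndex e g, joinIndex e f}, α (a, b) =
      α (a, joinIndex f g) + (α (a, joinIndex e g) + α (a, joinIndex e f)) := by
    rw [sum_insert join_fg_notMem, sum_pair join_ne]
  have e_notMem : e ∉ ({f, g} : Finset _) := by
    simp only [mem_insert, mem_singleton, hef.ne, heg.ne, or_self, not_false_eq_true]
  rw [sum_insert e_notMem, sum_pair hfg.ne] at sum_eq_zero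
  simp only [row_sum] at sum_eq_zero
  have zero {e f : Fin 6} (hef : e ≠ f) := coeff_joinIndex_eq_zero hα hef
  have zero' {e f : Fin 6} (hef : e ≠ f) : α (f, joinIndex e f) = 0 :=
    joinIndex_comm e f ▸ zero hef.symm
  linarith [zero hef.ne, zero hfg.ne, zero heg.ne, zero' hef.ne, zero' hfg.ne, zero' heg.ne]

end FourVertices

section Dimension

variable {α : Fin 6 × Fin 7 → ℚ}

/-- Eight monomials whose coefficients are coordinates on `X₄`. -/
def coordinateIndex : Fin 8 → Fin 6 × Fin 7 :=
  ![(3, 0), (4, 0), (3, 4), (4, 4), (3, 5), (2, 2), (4, 6), (2, 4)]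

theorem eq_zero_of_coordinates (hα : MemX4 α) (h : ∀ i, α (coordinateIndex i) = 0) : α = 0 := by
  have tree (e f g : Fin 6)
      (hl : (e < f ∧ f < g) ∧ IsForestList [joinedPair e, joinedPair f, joinedPair g]) :=
    coeff_add_coeff_add_coeff_eq_zero hα hl.1.1 hl.1.2 hl.2
  have coord_30 : α (3, 0) = 0 := h 0
  have coord_40 : α (4, 0) = 0 := h 1
  have coord_34 : α (3, 4) = 0 := h 2
  have coord_44 : α (4, 4) = 0 := h 3
  have coord_35 : α (3, 5) = 0 := h 4
  have coord_22 : α (2, 2) = 0 := h 5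
  have coord_46 : α (4, 6) = 0 := h 6
  have coord_24 : α (2, 4) = 0 := h 7
  have tree_013 : α (0, 2) + α (1, 1) + α (3, 0) = 0 := tree 0 1 3 (by decide)
  have tree_014 : α (0, 5) + α (1, 1) + α (4, 0) = 0 := tree 0 1 4 (by decide)
  have tree_015 : α (0, 2) + α (1, 4) + α (5, 0) = 0 := tree 0 1 5 (by decide)
  have tree_023 : α (0, 6) + α (2, 1) + α (3, 0) = 0 := tree 0 2 3 (by decide)
  have tree_024 : α (0, 3) + α (2, 1) + α (4, 0) = 0 := tree 0 2 4 (by decide)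
  have tree_025 : α (0, 3) + α (2, 4) + α (5, 0) = 0 := tree 0 2 5 (by decide)
  have tree_035 : α (0, 2) + α (3, 4) + α (5, 1) = 0 := tree 0 3 5 (by decide)
  have tree_045 : α (0, 3) + α (4, 4) + α (5, 1) = 0 := tree 0 4 5 (by decide)
  have tree_123 : α (1, 6) + α (2, 2) + α (3, 0) = 0 := tree 1 2 3 (by decide)
  have tree_124 : α (1, 3) + α (2, 5) + α (4, 0) = 0 := tree 1 2 4 (by decide)
  have tree_125 : α (1, 3) + α (2, 2) + α (5, 0) = 0 := tree 1 2 5 (by decide)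
  have tree_134 : α (1, 1) + α (3, 5) + α (4, 2) = 0 := tree 1 3 4 (by decide)
  have tree_145 : α (1, 3) + α (4, 2) + α (5, 5) = 0 := tree 1 4 5 (by decide)
  have tree_234 : α (2, 1) + α (3, 3) + α (4, 6) = 0 := tree 2 3 4 (by decide)
  have tree_235 : α (2, 2) + α (3, 3) + α (5, 6) = 0 := tree 2 3 5 (by decide)
  have tree_345 : α (3, 3) + α (4, 2) + α (5, 1) = 0 := tree 3 4 5 (by decide)
  funext q
  by_cases hq : ∃ f, q.1 ≠ f ∧ q.2 = joinIndex q.1 f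
  · obtain ⟨f, hf, hb⟩ := hq
    rw [Pi.zero_apply, ← coeff_joinIndex_eq_zero hα hf, ← hb]
  · fin_cases q <;>
      first
      | exact absurd (by decide) hq
      | simp only [Pi.zero_apply, Fin.mk_zero, Fin.mk_one, Fin.reduceFinMk]; linarith

theorem X4Basis_coordinateIndex (i k : Fin 8) : X4Basis k (coordinateIndex i) =
    ![![1, 0, 0, 0, 0, 0, 0, 0], ![0, 1, 0, 0, 0, 0, 0, 0], ![1, 0, 1, 0, 0, 0, 0, 0],
      ![0, 1, 0, 1, 0, 0, 0, 0], ![1, 0, 0, 0, 1, 0, 0, 0], ![0, 1, 0, 1, 0, 1, 1, 0],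
      ![0, 1, 0, 0, 0, 0, 1, 0], ![0, 1, 0, 1, 0, 1, 0, 1]] i k := by
  revert i k
  decide +kernel

theorem linearIndependent_X4Basis : LinearIndependent ℚ X4Basis := by
  refine Fintype.linearIndependent_iff.2 fun g hg => ?_
  have coordinate (i : Fin 8) : ∑ k, g k * X4Basis k (coordinateIndex i) = 0 := by
    simpa only [Finset.sum_apply, Pi.smul_apply, smul_eq_mul, Pi.zero_apply] using
      congrFun hg (coordinateIndex i)
  simp only [X4Basis_coordinateIndex, Fin.sum_univ_eight] at coordinate
  have e0 : g 0 = 0 := by simpa using coordinate 0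
  have e1 : g 1 = 0 := by simpa using coordinate 1
  have e2 : g 2 = 0 := by simpa [e0] using coordinate 2
  have e3 : g 3 = 0 := by simpa [e1] using coordinate 3
  have e4 : g 4 = 0 := by simpa [e0] using coordinate 4
  have e6 : g 6 = 0 := by simpa [e1] using coordinate 6
  have e5 : g 5 = 0 := by simpa [e1, e3, e6] using coordinate 5
  have e7 : g 7 = 0 := by simpa [e1, e3, e5] using coordinate 7
  simp only [Fin.forall_fin_succ, IsEmpty.forall_iff]
  exact ⟨e0, e1, e2, e3, e4, e5, e6, e7, trivial⟩

theorem finrank_X4_le : Module.finrank ℚ X4 ≤ 8 := by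
  let coordinates : X4 →ₗ[ℚ] Fin 8 → ℚ := LinearMap.funLeft ℚ ℚ coordinateIndex ∘ₗ X4.subtype
  have injective : Function.Injective coordinates :=
    (injective_iff_map_eq_zero coordinates).2 fun α h =>
      Subtype.ext (eq_zero_of_coordinates α.2 (congrFun h))
  simpa only [Module.finrank_fin_fun] using LinearMap.finrank_le_finrank_of_injective injective

theorem span_X4Basis : Submodule.span ℚ (Set.range X4Basis) = X4 := by
  refine Submodule.eq_of_le_of_finrank_le ?_ ?_
  · exact Submodule.span_le.2 (Set.range_subset_iff.2 X4Basis_mem)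
  · rw [finrank_span_eq_card linearIndependent_X4Basis, Fintype.card_fin]
    exact finrank_X4_le

end Dimension

/-- **`dim X₄ = 8 = 4·(4−2)`**, with explicit basis the eight differences
`L_{4,4}(1)−L_{4,4}(3)`, `L_{4,4}(2)−L_{4,4}(3)`, `L_{4,3}(1)−L_{4,4}(3)`,
`L_{4,3}(2)−L_{4,4}(3)`, `L_{4,2}(1)−L_{4,4}(3)`, `L_{4,2}(2)−L_{4,4}(3)`,
`L_{4,1}(1)−L_{4,4}(3)`, `L_{4,1}(2)−L_{4,4}(3)`: these are linearly independent and
span exactly the space `X₄` of vanishing combinations. -/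
theorem X4_dimension :
    let basis : Fin 8 → (Fin 6 × Fin 7 → ℚ) :=
      ![L441 - L443, L442 - L443, L431 - L443, L432 - L443,
        L421 - L443, L422 - L443, L411 - L443, L412 - L443]
    LinearIndependent ℚ basis ∧
      ∀ α : Fin 6 × Fin 7 → ℚ,
        MemX4 α ↔ α ∈ Submodule.span ℚ (Set.range basis) := by
  intro basis
  have span_eq : Submodule.span ℚ (Set.range basis) = X4 := span_X4Basis
  refine ⟨linearIndependent_X4Basis, fun α => ?_⟩
  rw [span_eq]
  rfl
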